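/- Let F be a complex Hilbert space and let A = (A_t)_{t≥0} be a C₀-semigroup of bounded operators on L²(ℝ₊, F). Then A doubly commutes with the right-shift semigroup S^F (i.e., A_t S_s^F = S_s^F A_t and A_t (S_s^F)* = (S_s^F)* A_t for all s,t ≥ 0) if and only if there exists a C₀-semigroup (B_t)_{t≥0} of bounded operators on F such that for all t ≥ 0 and f ∈ L²(ℝ₊, F), (A_t f)(x) = B_t(f(x)) for a.e. x (i.e., A_t = I ⊗ B_t). In particular, a C₀-semigroup A of normal operators commutes with S^F if and only if A_t = I ⊗ B_t for some C₀-semigroup (B_t)_{t≥0} of normal operators on F. -/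

import Mathlib

open MeasureTheory ContinuousLinearMap
open scoped ENNReal NNReal InnerProductSpace ComplexInnerProductSpace

noncomputable section

section SemigroupDefs

variable {G : Type} [NormedAddCommGroup G] [InnerProductSpace ℂ G] [CompleteSpace G]

/-- A (C₀-) strongly continuous one-parameter semigroup of bounded operators. -/
def IsC0Semigroup (V : ℝ≥0 → G →L[ℂ] G) : Prop :=
  V 0 = 1 ∧ (∀ s t : ℝ≥0, V (s + t) = V s ∘L V t) ∧ ∀ x : G, Continuous fun t : ℝ≥0 => V t x

/-- A C₀-semigroup of isometries. -/
def IsIsometrySemigroup (V : ℝ≥0 → G →L[ℂ] G) : Prop :=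
  IsC0Semigroup V ∧ ∀ (t : ℝ≥0) (x : G), ‖V t x‖ = ‖x‖

/-- The closed subspace `L` reduces the semigroup `V`: it is invariant under every `V t`
and every `(V t)*`. -/
def ReducedBy (V : ℝ≥0 → G →L[ℂ] G) (L : Submodule ℂ G) : Prop :=
  (∀ t : ℝ≥0, ∀ x ∈ L, V t x ∈ L) ∧ ∀ t : ℝ≥0, ∀ x ∈ L, adjoint (V t) x ∈ L

/-- `T` restricts to a unitary operator on the subspace `L`. -/
def RestrictsToUnitaryOn (T : G →L[ℂ] G) (L : Submodule ℂ G) : Prop :=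
  (∀ x ∈ L, T x ∈ L) ∧ (∀ x ∈ L, ‖T x‖ = ‖x‖) ∧ ∀ y ∈ L, ∃ x ∈ L, T x = y

/-- Every `V t` restricts to a unitary operator on the subspace `L`. -/
def IsUnitarySemigroupOn (V : ℝ≥0 → G →L[ℂ] G) (L : Submodule ℂ G) : Prop :=
  ∀ t : ℝ≥0, RestrictsToUnitaryOn (V t) L

/-- A unitary C₀-semigroup: every `V t` is a surjective isometry. -/
def IsUnitarySemigroup (V : ℝ≥0 → G →L[ℂ] G) : Prop :=
  IsC0Semigroup V ∧ ∀ t : ℝ≥0, (∀ x : G, ‖V t x‖ = ‖x‖) ∧ Function.Surjective (V t)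

/-- `V` is completely nonunitary on the subspace `K`: there is no nonzero closed subspace
of `K` reducing `V` on which every `V t` restricts to a unitary. -/
def IsCnuOn (V : ℝ≥0 → G →L[ℂ] G) (K : Submodule ℂ G) : Prop :=
  ∀ L : Submodule ℂ G, IsClosed (L : Set G) → L ≤ K → ReducedBy V L →
    IsUnitarySemigroupOn V L → L = ⊥

/-- A completely nonunitary semigroup. -/
def IsCnu (V : ℝ≥0 → G →L[ℂ] G) : Prop := IsCnuOn V ⊤

/-- Two semigroups commute. -/
def SgCommute (V1 V2 : ℝ≥0 → G →L[ℂ] G) : Prop :=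
  ∀ t s : ℝ≥0, V1 t ∘L V2 s = V2 s ∘L V1 t

/-- Two semigroups doubly commute. -/
def SgDoublyCommute (V1 V2 : ℝ≥0 → G →L[ℂ] G) : Prop :=
  SgCommute V1 V2 ∧ ∀ t s : ℝ≥0, V1 t ∘L adjoint (V2 s) = adjoint (V2 s) ∘L V1 t

/-- A completely nonunitary pair of semigroups: no nonzero closed subspace reduces both
semigroups in such a way that both restrict to unitary semigroups. -/
def IsCnuPair (V1 V2 : ℝ≥0 → G →L[ℂ] G) : Prop :=
  ∀ L : Submodule ℂ G, IsClosed (L : Set G) → ReducedBy V1 L → ReducedBy V2 L →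
    IsUnitarySemigroupOn V1 L → IsUnitarySemigroupOn V2 L → L = ⊥

/-- A strongly continuous one-parameter unitary group. -/
def IsUnitaryGroup (U : ℝ → G →L[ℂ] G) : Prop :=
  U 0 = 1 ∧ (∀ s t : ℝ, U (s + t) = U s ∘L U t) ∧
  (∀ (t : ℝ) (x : G), ‖U t x‖ = ‖x‖) ∧ (∀ t : ℝ, Function.Surjective (U t)) ∧
  ∀ x : G, Continuous fun t : ℝ => U t x

/-- Two subspaces are mutually orthogonal. -/
def OrthoSubspaces (A B : Submodule ℂ G) : Prop :=
  ∀ x ∈ A, ∀ y ∈ B, ⟪x, y⟫_ℂ = 0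

end SemigroupDefs

/-- Lebesgue measure restricted to `ℝ₊ = [0, ∞)`; `Lp F 2 rplus` plays the role of
`L²(ℝ₊, F)`. -/
def rplus : Measure ℝ := (volume : Measure ℝ).restrict (Set.Ici 0)

/-- `T` is the right shift by `t` on `L²(ℝ₊, F)`:
`(T f)(x) = f (x - t)` for `x ≥ t` and `(T f)(x) = 0` otherwise. -/
def IsRightShiftOp (F : Type) [NormedAddCommGroup F] [InnerProductSpace ℂ F]
    (t : ℝ) (T : Lp F 2 rplus →L[ℂ] Lp F 2 rplus) : Prop :=
  ∀ f : Lp F 2 rplus,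
    (T f : ℝ → F) =ᵐ[rplus] fun x => if t ≤ x then (f : ℝ → F) (x - t) else 0

/-!
Write `J t v = 1_[0,t) ⊗ v`. Then `(J s)* (J t) = min s t`, the ranges of the `J t` span a dense
subspace, and `S s (J t) = J (s + t) - J s`; so an operator on `L²(ℝ₊, F)` is determined by its
entries `(J s)* T (J t)`, and all that is needed about the shifts is algebra with the `J t`.

If `T` doubly commutes with the shifts, then `(J s)* S s = 0` and the relation above give
`(J s)* T (J t) = (J r)* T (J r)` with `r = min s t`, and show that `(J r)* T (J r)` is additive
in `r`. As `‖J r‖² ≤ r`, it is also Lipschitz in `r`, hence equal to `r • B` for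
`B = (J 1)* T (J 1)`. Thus `T` has the same entries `min s t • B` as `I ⊗ B`.

For normal operators, Fuglede's theorem turns commutation into double commutation.
-/

section Additive

variable {E : Type*} [NormedAddCommGroup E]

lemma denseRange_nnratCast_nnreal : DenseRange ((↑) : ℚ≥0 → ℝ≥0) := by
  refine dense_of_exists_between fun a b hab => ?_
  obtain ⟨q, hq, haq, hqb⟩ := (NNReal.lt_iff_exists_rat_btwn a b).1 hab
  lift q to ℚ≥0 using hq
  have hcast : Real.toNNReal ((q : ℚ) : ℝ) = q := Real.toNNReal_coe (r := q)
  exact ⟨q, ⟨q, rfl⟩, hcast ▸ haq, hcast ▸ hqb⟩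

lemma lipschitzWith_of_norm_le_mul (f : ℝ≥0 →+ E) {C : ℝ≥0} (hC : ∀ t, ‖f t‖ ≤ C * t) :
    LipschitzWith C f := by
  have dist_add_left_le (s r : ℝ≥0) : dist (f s) (f (s + r)) ≤ C * dist s (s + r) := by
    simpa [NNReal.dist_eq] using hC r
  refine LipschitzWith.of_dist_le_mul fun s t => ?_
  rcases le_total s t with h | h <;> obtain ⟨r, rfl⟩ := exists_add_of_le h
  · exact dist_add_left_le s r
  · rw [dist_comm (f _), dist_comm (_ + _)]
    exact dist_add_left_le t r

lemma map_nnreal_smul [NormedSpace ℝ E] (f : ℝ≥0 →+ E) (hf : Continuous f) (t x : ℝ≥0) :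
    f (t • x) = t • f x := by
  suffices (fun t : ℝ≥0 => f (t • x)) = fun t => t • f x from congr_fun this t
  exact denseRange_nnratCast_nnreal.equalizer (by fun_prop) (by fun_prop)
    (funext fun q => map_nnratCast_smul f ℝ≥0 ℝ≥0 q x)

end Additive

section Ampliation

variable {α 𝕜 E F G : Type*} [MeasurableSpace α] {μ : Measure α} [RCLike 𝕜] {p : ℝ≥0∞}
  [Fact (1 ≤ p)] [NormedAddCommGroup E] [NormedAddCommGroup F] [NormedAddCommGroup G]

section NormedSpace

variable [NormedSpace 𝕜 E] [NormedSpace 𝕜 F] [NormedSpace 𝕜 G]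

lemma compLpL_one : (1 : E →L[𝕜] E).compLpL p μ = 1 := by
  ext1 f
  exact Lp.ext ((1 : E →L[𝕜] E).coeFn_compLpL f)

lemma compLpL_comp (L : F →L[𝕜] G) (M : E →L[𝕜] F) :
    (L ∘L M).compLpL p μ = L.compLpL p μ ∘L M.compLpL p μ := by
  ext1 f
  refine Lp.ext ?_
  filter_upwards [(L ∘L M).coeFn_compLpL f, L.coeFn_compLpL (M.compLpL p μ f),
    M.coeFn_compLpL f] with x hLM hL hM
  rw [hLM, comp_apply, comp_apply, hL, hM]

lemma eq_compLpL_iff_forall_ae_eq (T : Lp E p μ →L[𝕜] Lp F p μ) (L : E →L[𝕜] F) :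
    T = L.compLpL p μ ↔ ∀ f : Lp E p μ, T f =ᵐ[μ] fun x => L (f x) := by
  refine ⟨?_, fun h => ContinuousLinearMap.ext fun f =>
    Lp.ext ((h f).trans (L.coeFn_compLpL f).symm)⟩
  rintro rfl f
  exact L.coeFn_compLpL f

variable (𝕜 p) in
/-- The operator `v ↦ 1_s ⊗ v` from `E` to `Lᵖ(μ, E)`, for a measurable set `s` of finite
measure: `indicatorConstLp` as a bounded operator in the constant. -/
def indicatorConstCLM {s : Set α} (hs : MeasurableSet s) (hμs : μ s ≠ ∞) : E →L[𝕜] Lp E p μ :=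
  LinearMap.mkContinuous
    { toFun := indicatorConstLp p hs hμs
      map_add' := fun _ _ => indicatorConstLp_add.symm
      map_smul' := fun c v => by
        simp only [indicatorConstLp, ← MemLp.toLp_const_smul, RingHom.id_apply,
          Set.indicator_const_smul]
        rfl }
    (μ.real s ^ (1 / p.toReal))
    fun v => (norm_indicatorConstLp_le (hs := hs) (hμs := hμs)).trans_eq (mul_comm _ _)

lemma coeFn_indicatorConstCLM {s : Set α} (hs : MeasurableSet s) (hμs : μ s ≠ ∞) (v : E) :
    indicatorConstCLM 𝕜 p hs hμs v =ᵐ[μ] s.indicator fun _ => v :=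
  indicatorConstLp_coeFn (hs := hs) (hμs := hμs)

lemma compLpL_comp_indicatorConstCLM {s : Set α} (hs : MeasurableSet s) (hμs : μ s ≠ ∞)
    (L : E →L[𝕜] F) :
    L.compLpL p μ ∘L indicatorConstCLM 𝕜 p hs hμs = indicatorConstCLM 𝕜 p hs hμs ∘L L := by
  ext1 v
  refine Lp.ext ?_
  filter_upwards [L.coeFn_compLpL (indicatorConstCLM 𝕜 p hs hμs v),
    coeFn_indicatorConstCLM (𝕜 := 𝕜) (p := p) hs hμs v,
    coeFn_indicatorConstCLM (𝕜 := 𝕜) (p := p) hs hμs (L v)] with x hL hv hLv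
  rw [comp_apply, comp_apply, hL, hv, hLv]
  exact (congr_fun (Set.indicator_comp_of_zero (map_zero L)) x).symm

end NormedSpace

variable [InnerProductSpace 𝕜 E] [InnerProductSpace 𝕜 F] [CompleteSpace E]

lemma adjoint_compLpL [CompleteSpace F] (L : E →L[𝕜] F) :
    adjoint (L.compLpL 2 μ) = (adjoint L).compLpL 2 μ := by
  refine ((eq_adjoint_iff _ _).2 fun f g => ?_).symm
  rw [L2.inner_def, L2.inner_def]
  refine integral_congr_ae ?_
  filter_upwards [L.coeFn_compLpL g, (adjoint L).coeFn_compLpL f] with x hg hf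
  rw [hg, hf, adjoint_inner_left]

lemma adjoint_indicatorConstCLM_comp {s t : Set α} (hs : MeasurableSet s) (hμs : μ s ≠ ∞)
    (ht : MeasurableSet t) (hμt : μ t ≠ ∞) :
    adjoint (indicatorConstCLM (E := E) 𝕜 2 hs hμs) ∘L indicatorConstCLM 𝕜 2 ht hμt =
      (μ.real (s ∩ t) : 𝕜) • (1 : E →L[𝕜] E) := by
  ext1 w
  refine ext_inner_left 𝕜 fun v => ?_
  rw [comp_apply, adjoint_inner_right]
  refine (L2.inner_indicatorConstLp_indicatorConstLp (𝕜 := 𝕜) hs ht hμs hμt v w).trans ?_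
  rw [_root_.smul_apply, one_apply_eq_self, inner_smul_right, RCLike.real_smul_eq_coe_mul]

end Ampliation

lemma ae_eq_zero_of_forall_intervalIntegral_eq_zero {E : Type*} [NormedAddCommGroup E]
    [NormedSpace ℝ E] [CompleteSpace E] {f : ℝ → E} (hf : LocallyIntegrable f)
    (h : ∀ x, ∫ y in (0 : ℝ)..x, f y = 0) : f =ᵐ[volume] 0 := by
  filter_upwards [LocallyIntegrable.ae_hasDerivAt_integral hf] with x hx
  have hderiv := hx 0
  simp only [h] at hderiv
  exact hderiv.unique (hasDerivAt_const x 0)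

section InitialIndicator

variable {F : Type*} [NormedAddCommGroup F] [InnerProductSpace ℂ F]

lemma rplus_Ico_zero (s : ℝ≥0) : rplus (Set.Ico 0 (s : ℝ)) = s := by
  rw [rplus, Measure.restrict_apply measurableSet_Ico, Set.inter_eq_left.2 Set.Ico_subset_Ici_self,
    Real.volume_Ico, sub_zero, ENNReal.ofReal_coe_nnreal]

/-- The operator `v ↦ 1_[0,s) ⊗ v` from `F` to `L²(ℝ₊, F)`. -/
def initialIndicator (s : ℝ≥0) : F →L[ℂ] Lp F 2 rplus :=
  indicatorConstCLM ℂ 2 (measurableSet_Ico (a := (0 : ℝ)) (b := s))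
    (rplus_Ico_zero s ▸ ENNReal.coe_ne_top)

lemma coeFn_initialIndicator (s : ℝ≥0) (v : F) :
    initialIndicator s v =ᵐ[rplus] (Set.Ico 0 (s : ℝ)).indicator fun _ => v :=
  coeFn_indicatorConstCLM _ _ v

lemma compLpL_comp_initialIndicator (B : F →L[ℂ] F) (s : ℝ≥0) :
    B.compLpL 2 rplus ∘L initialIndicator s = initialIndicator s ∘L B :=
  compLpL_comp_indicatorConstCLM _ _ B

variable [CompleteSpace F]

lemma adjoint_initialIndicator_comp (s t : ℝ≥0) :
    adjoint (initialIndicator (F := F) s) ∘L initialIndicator t = min s t • 1 := by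
  refine (adjoint_indicatorConstCLM_comp _ _ _ _).trans ?_
  have hmin : min (s : ℝ) t = ((min s t : ℝ≥0) : ℝ) := by simp
  rw [Set.Ico_inter_Ico, max_self, hmin, measureReal_def, rplus_Ico_zero, ENNReal.coe_toReal]
  rfl

/-- The entry `J_s* T J_t` of an operator `T` on `L²(ℝ₊, F)`, where `J_t = initialIndicator t`;
these entries determine `T`, as a matrix does. -/
def matrixEntry (T : Lp F 2 rplus →L[ℂ] Lp F 2 rplus) (s t : ℝ≥0) : F →L[ℂ] F :=
  adjoint (initialIndicator s) ∘L T ∘L initialIndicator t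

lemma matrixEntry_compLpL (B : F →L[ℂ] F) (s t : ℝ≥0) :
    matrixEntry (B.compLpL 2 rplus) s t = min s t • B := by
  rw [matrixEntry, compLpL_comp_initialIndicator, ← comp_assoc, adjoint_initialIndicator_comp,
    smul_comp]
  rfl

lemma compLpL_rplus_injective :
    Function.Injective fun B : F →L[ℂ] F => B.compLpL 2 rplus := fun B C h => by
  simpa [matrixEntry_compLpL] using congr(matrixEntry $h 1 1)

lemma norm_initialIndicator_mul_self_le (t : ℝ≥0) :
    ‖initialIndicator (F := F) t‖ * ‖initialIndicator (F := F) t‖ ≤ t := by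
  rw [← norm_adjoint_comp_self, adjoint_initialIndicator_comp, min_self, NNReal.smul_def]
  refine (norm_smul_le _ _).trans ?_
  rw [NNReal.norm_eq]
  exact mul_le_of_le_one_right t.coe_nonneg norm_id_le

lemma norm_matrixEntry_self_le (T : Lp F 2 rplus →L[ℂ] Lp F 2 rplus) (t : ℝ≥0) :
    ‖matrixEntry T t t‖ ≤ ‖T‖₊ * t := by
  calc ‖matrixEntry T t t‖
      ≤ ‖initialIndicator (F := F) t‖ * (‖T‖ * ‖initialIndicator (F := F) t‖) := by
        refine (opNorm_comp_le _ _).trans ?_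
        rw [LinearIsometryEquiv.norm_map]
        gcongr
        exact opNorm_comp_le _ _
    _ = ‖T‖ * (‖initialIndicator (F := F) t‖ * ‖initialIndicator (F := F) t‖) := by ring
    _ ≤ ‖T‖₊ * t := by
        gcongr
        · exact le_rfl
        · exact norm_initialIndicator_mul_self_le t

lemma eq_zero_of_forall_adjoint_initialIndicator_eq_zero {f : Lp F 2 rplus}
    (h : ∀ s : ℝ≥0, adjoint (initialIndicator s) f = 0) : f = 0 := by
  have integral_Ico_eq_zero (s : ℝ≥0) :
      ∫ x in Set.Ico 0 (s : ℝ) ∩ Set.Ici 0, f x = 0 := by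
    rw [← Measure.restrict_restrict measurableSet_Ico, ← rplus]
    refine ext_inner_left ℂ fun v => ?_
    rw [← L2.inner_indicatorConstLp_eq_inner_setIntegral ℂ measurableSet_Ico
      (rplus_Ico_zero s ▸ ENNReal.coe_ne_top)]
    change ⟪initialIndicator s v, f⟫_ℂ = _
    rw [← adjoint_inner_right, h, inner_zero_right]
  set g : ℝ → F := (Set.Ici 0).indicator f with hg
  have hg_loc : LocallyIntegrable g :=
    ((memLp_indicator_iff_restrict measurableSet_Ici).2 (Lp.memLp f)).locallyIntegrable
      one_le_two
  have hg_integral (x : ℝ) : ∫ y in (0 : ℝ)..x, g y = 0 := by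
    rcases le_total 0 x with hx | hx
    · lift x to ℝ≥0 using hx
      rw [intervalIntegral.integral_of_le x.coe_nonneg, ← integral_Ico_eq_integral_Ioc, hg,
        setIntegral_indicator measurableSet_Ici, integral_Ico_eq_zero]
    · rw [intervalIntegral.integral_of_ge hx, ← integral_Ico_eq_integral_Ioc,
        setIntegral_eq_zero_of_forall_eq_zero, neg_zero]
      exact fun y hy => Set.indicator_of_notMem (not_le.2 hy.2) _
  have hg_zero : g =ᵐ[volume.restrict (Set.Ici 0)] 0 :=
    ae_restrict_of_ae (ae_eq_zero_of_forall_intervalIntegral_eq_zero hg_loc hg_integral)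
  rw [Lp.eq_zero_iff_ae_eq_zero]
  exact (indicator_ae_eq_restrict measurableSet_Ici).symm.trans hg_zero

lemma eq_of_forall_adjoint_initialIndicator_comp_eq {G : Type*} [NormedAddCommGroup G]
    [NormedSpace ℂ G] {D D' : G →L[ℂ] Lp F 2 rplus}
    (h : ∀ s : ℝ≥0, adjoint (initialIndicator s) ∘L D = adjoint (initialIndicator s) ∘L D') :
    D = D' := by
  ext1 x
  refine sub_eq_zero.1 (eq_zero_of_forall_adjoint_initialIndicator_eq_zero fun s => ?_)
  rw [map_sub, sub_eq_zero]
  exact congr($(h s) x)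

lemma eq_of_forall_comp_initialIndicator_eq {G : Type*} [NormedAddCommGroup G]
    [InnerProductSpace ℂ G] [CompleteSpace G] {D D' : Lp F 2 rplus →L[ℂ] G}
    (h : ∀ t : ℝ≥0, D ∘L initialIndicator t = D' ∘L initialIndicator t) : D = D' := by
  refine adjoint.injective (eq_of_forall_adjoint_initialIndicator_comp_eq fun t => ?_)
  rw [← adjoint_comp, ← adjoint_comp, h]

lemma eq_of_forall_matrixEntry_eq {T T' : Lp F 2 rplus →L[ℂ] Lp F 2 rplus}
    (h : ∀ s t, matrixEntry T s t = matrixEntry T' s t) : T = T' :=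
  eq_of_forall_comp_initialIndicator_eq fun t =>
    eq_of_forall_adjoint_initialIndicator_comp_eq fun s => h s t

end InitialIndicator

section Shift

lemma ae_rplus_sub {P : ℝ → Prop} (h : ∀ᵐ x ∂rplus, P x) (s : ℝ) :
    ∀ᵐ x ∂rplus, s ≤ x → P (x - s) := by
  have hvol := (ae_restrict_iff' measurableSet_Ici).1 h
  refine ae_restrict_of_ae ?_
  filter_upwards [(measurePreserving_sub_right volume s).quasiMeasurePreserving.ae hvol]
    with x hx hsx
  exact hx (sub_nonneg.2 hsx)

variable {F : Type} [NormedAddCommGroup F] [InnerProductSpace ℂ F] {s : ℝ≥0}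
  {S T : Lp F 2 rplus →L[ℂ] Lp F 2 rplus}

namespace IsRightShiftOp

lemma initialIndicator_add (hS : IsRightShiftOp F s S) (t : ℝ≥0) :
    initialIndicator (s + t) = initialIndicator s + S ∘L initialIndicator t := by
  ext1 v
  refine Lp.ext ?_
  filter_upwards [Lp.coeFn_add (initialIndicator s v) (S (initialIndicator t v)),
    coeFn_initialIndicator (s + t) v, coeFn_initialIndicator s v, hS (initialIndicator t v),
    ae_rplus_sub (coeFn_initialIndicator t v) s] with x hsum hst hs hShift ht
  refine hst.trans (.trans ?_ hsum.symm)
  rw [Pi.add_apply, hs, hShift]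
  by_cases hx : (s : ℝ) ≤ x
  · rw [if_pos hx, ht hx]
    have hx0 : 0 ≤ x := s.coe_nonneg.trans hx
    simp [Set.indicator, hx, hx0, not_lt.2 hx, sub_lt_iff_lt_add']
  · have hxst : x < s + t := (not_le.1 hx).trans_le (le_add_of_nonneg_right t.coe_nonneg)
    simp [Set.indicator, hx, hxst, not_le.1 hx]

lemma comp_initialIndicator (hS : IsRightShiftOp F s S) (t : ℝ≥0) :
    S ∘L initialIndicator t = initialIndicator (s + t) - initialIndicator s :=
  eq_sub_of_add_eq' (hS.initialIndicator_add t).symm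

variable [CompleteSpace F]

lemma commute_compLpL (hS : IsRightShiftOp F s S) (B : F →L[ℂ] F) :
    Commute (B.compLpL 2 rplus) S := by
  refine eq_of_forall_comp_initialIndicator_eq fun t => ?_
  simp only [mul_def, comp_assoc, hS.comp_initialIndicator, compLpL_comp_initialIndicator,
    comp_sub, ← sub_comp, ← comp_assoc S]

lemma adjoint_initialIndicator_comp_eq_zero (hS : IsRightShiftOp F s S) :
    adjoint (initialIndicator s) ∘L S = 0 := by
  refine eq_of_forall_comp_initialIndicator_eq fun t => ?_
  rw [comp_assoc, hS.comp_initialIndicator, comp_sub, adjoint_initialIndicator_comp,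
    adjoint_initialIndicator_comp, min_eq_left le_self_add, min_self, sub_self, zero_comp]

lemma adjoint_comp_initialIndicator_eq_zero (hS : IsRightShiftOp F s S) :
    adjoint S ∘L initialIndicator s = 0 := by
  simpa using congr(adjoint $hS.adjoint_initialIndicator_comp_eq_zero)

lemma adjoint_comp_self (hS : IsRightShiftOp F s S) : adjoint S ∘L S = 1 := by
  refine eq_of_forall_matrixEntry_eq fun r t => ?_
  calc matrixEntry (adjoint S ∘L S) r t
      = adjoint (S ∘L initialIndicator r) ∘L S ∘L initialIndicator t := by
        rw [adjoint_comp]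
        rfl
    _ = min r t • (1 : F →L[ℂ] F) := by
        simp only [hS.comp_initialIndicator, map_sub, sub_comp, comp_sub,
          adjoint_initialIndicator_comp, min_add_add_left, min_self,
          min_eq_left (le_self_add : s ≤ s + t), min_eq_right (le_self_add : s ≤ s + r), add_smul]
        abel
    _ = matrixEntry 1 r t :=
        (adjoint_initialIndicator_comp r t).symm

lemma adjoint_comp_initialIndicator_add (hS : IsRightShiftOp F s S) (t : ℝ≥0) :
    adjoint S ∘L initialIndicator (s + t) = initialIndicator t := by
  rw [hS.initialIndicator_add, comp_add, hS.adjoint_comp_initialIndicator_eq_zero, zero_add,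
    ← comp_assoc, hS.adjoint_comp_self]
  rfl

lemma adjoint_initialIndicator_add (hS : IsRightShiftOp F s S) (t : ℝ≥0) :
    adjoint (initialIndicator (s + t)) =
      adjoint (initialIndicator s) + adjoint (initialIndicator t) ∘L adjoint S := by
  rw [hS.initialIndicator_add, map_add, adjoint_comp]

lemma matrixEntry_add_right (hS : IsRightShiftOp F s S) (hT : T ∘L S = S ∘L T) (t : ℝ≥0) :
    matrixEntry T s (s + t) = matrixEntry T s s := by
  have hzero : adjoint (initialIndicator s) ∘L T ∘L S = 0 := by
    rw [hT, ← comp_assoc, hS.adjoint_initialIndicator_comp_eq_zero, zero_comp]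
  rw [matrixEntry, hS.initialIndicator_add, comp_add, comp_add, ← comp_assoc T,
    ← comp_assoc _ (T ∘L S), hzero, zero_comp, add_zero, matrixEntry]

lemma matrixEntry_add_left (hS : IsRightShiftOp F s S)
    (hT : T ∘L adjoint S = adjoint S ∘L T) (t : ℝ≥0) :
    matrixEntry T (s + t) s = matrixEntry T s s := by
  rw [matrixEntry, hS.adjoint_initialIndicator_add, add_comp, comp_assoc,
    ← comp_assoc (adjoint S), ← hT, comp_assoc T, hS.adjoint_comp_initialIndicator_eq_zero,
    comp_zero, comp_zero, add_zero, matrixEntry]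

lemma matrixEntry_add_add (hS : IsRightShiftOp F s S) (hT : T ∘L S = S ∘L T)
    (hT' : T ∘L adjoint S = adjoint S ∘L T) (t : ℝ≥0) :
    matrixEntry T (s + t) (s + t) = matrixEntry T s s + matrixEntry T t t := by
  calc matrixEntry T (s + t) (s + t)
      = matrixEntry T s (s + t) +
          adjoint (initialIndicator t) ∘L (adjoint S ∘L T) ∘L initialIndicator (s + t) := by
        rw [matrixEntry, hS.adjoint_initialIndicator_add, add_comp]
        rfl
    _ = matrixEntry T s s + matrixEntry T t t := by
        rw [hS.matrixEntry_add_right hT, ← hT', comp_assoc T, hS.adjoint_comp_initialIndicator_add]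
        rfl

end IsRightShiftOp

end Shift

section DoublyCommutant

variable {F : Type} [NormedAddCommGroup F] [InnerProductSpace ℂ F] [CompleteSpace F]
  {S : ℝ≥0 → Lp F 2 rplus →L[ℂ] Lp F 2 rplus} {T : Lp F 2 rplus →L[ℂ] Lp F 2 rplus}

lemma matrixEntry_self_eq_smul (hS : ∀ s : ℝ≥0, IsRightShiftOp F s (S s))
    (hT : ∀ s, T ∘L S s = S s ∘L T) (hT' : ∀ s, T ∘L adjoint (S s) = adjoint (S s) ∘L T)
    (t : ℝ≥0) : matrixEntry T t t = t • matrixEntry T 1 1 := by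
  let diagonal : ℝ≥0 →+ F →L[ℂ] F := AddMonoidHom.mk' (fun t => matrixEntry T t t)
    fun s => (hS s).matrixEntry_add_add (hT s) (hT' s)
  have hcont : Continuous diagonal :=
    (lipschitzWith_of_norm_le_mul diagonal (norm_matrixEntry_self_le T)).continuous
  simpa [diagonal] using map_nnreal_smul diagonal hcont t 1

lemma matrixEntry_eq_min_smul (hS : ∀ s : ℝ≥0, IsRightShiftOp F s (S s))
    (hT : ∀ s, T ∘L S s = S s ∘L T) (hT' : ∀ s, T ∘L adjoint (S s) = adjoint (S s) ∘L T)
    (s t : ℝ≥0) : matrixEntry T s t = min s t • matrixEntry T 1 1 := by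
  rw [← matrixEntry_self_eq_smul hS hT hT']
  rcases le_total s t with h | h <;> obtain ⟨r, rfl⟩ := exists_add_of_le h
  · rw [(hS s).matrixEntry_add_right (hT s), min_eq_left h]
  · rw [(hS t).matrixEntry_add_left (hT' t), min_eq_right h]

theorem doubly_commutes_shifts_iff_exists_eq_compLpL (hS : ∀ s : ℝ≥0, IsRightShiftOp F s (S s)) :
    ((∀ s, T ∘L S s = S s ∘L T) ∧ ∀ s, T ∘L adjoint (S s) = adjoint (S s) ∘L T) ↔
      ∃ B : F →L[ℂ] F, T = B.compLpL 2 rplus := by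
  constructor
  · rintro ⟨hT, hT'⟩
    refine ⟨matrixEntry T 1 1, eq_of_forall_matrixEntry_eq fun s t => ?_⟩
    rw [matrixEntry_eq_min_smul hS hT hT', matrixEntry_compLpL]
  · rintro ⟨B, rfl⟩
    refine ⟨fun s => (hS s).commute_compLpL B, fun s => ?_⟩
    have hcomm := (hS s).commute_compLpL (adjoint B)
    rw [← adjoint_compLpL, ← star_eq_adjoint, commute_star_comm] at hcomm
    exact hcomm

lemma isC0Semigroup_of_compLpL {B : ℝ≥0 → F →L[ℂ] F}
    (hB : IsC0Semigroup fun t => (B t).compLpL 2 rplus) : IsC0Semigroup B := by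
  obtain ⟨hzero, hadd, hcont⟩ := hB
  refine ⟨compLpL_rplus_injective (hzero.trans compLpL_one.symm), fun s t =>
    compLpL_rplus_injective ((hadd s t).trans (compLpL_comp _ _).symm), fun v => ?_⟩
  have hB_eq (t : ℝ≥0) :
      B t v = adjoint (initialIndicator 1) ((B t).compLpL 2 rplus (initialIndicator 1 v)) := by
    have hentry := congr($(matrixEntry_compLpL (B t) 1 1) v)
    rw [min_self, one_smul] at hentry
    exact hentry.symm
  simp only [hB_eq]
  exact (adjoint (initialIndicator (F := F) 1)).continuous.comp (hcont _)

end DoublyCommutant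

/-- A C₀-semigroup `A` on `L²(ℝ₊, F)` doubly commutes with the right-shift semigroup iff
`A_t = I ⊗ B_t` for a C₀-semigroup `B` on `F`; in particular a C₀-semigroup of normal
operators commutes with the right-shift semigroup iff it is of this form with each `B_t`
normal. -/
theorem doubly_commuting_with_right_shift (F : Type) [NormedAddCommGroup F]
    [InnerProductSpace ℂ F] [CompleteSpace F]
    (S : ℝ≥0 → Lp F 2 rplus →L[ℂ] Lp F 2 rplus)
    (hS : ∀ t : ℝ≥0, IsRightShiftOp F (t : ℝ) (S t))
    (A : ℝ≥0 → Lp F 2 rplus →L[ℂ] Lp F 2 rplus) (hA : IsC0Semigroup A) :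
    (((∀ t s : ℝ≥0, A t ∘L S s = S s ∘L A t) ∧
        ∀ t s : ℝ≥0, A t ∘L adjoint (S s) = adjoint (S s) ∘L A t) ↔
      ∃ B : ℝ≥0 → F →L[ℂ] F, IsC0Semigroup B ∧
        ∀ (t : ℝ≥0) (f : Lp F 2 rplus),
          (A t f : ℝ → F) =ᵐ[rplus] fun x => B t ((f : ℝ → F) x)) ∧
    ((∀ t : ℝ≥0, A t ∘L adjoint (A t) = adjoint (A t) ∘L A t) →
      ((∀ t s : ℝ≥0, A t ∘L S s = S s ∘L A t) ↔
        ∃ B : ℝ≥0 → F →L[ℂ] F, IsC0Semigroup B ∧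
          (∀ t : ℝ≥0, B t ∘L adjoint (B t) = adjoint (B t) ∘L B t) ∧
          ∀ (t : ℝ≥0) (f : Lp F 2 rplus),
            (A t f : ℝ → F) =ᵐ[rplus] fun x => B t ((f : ℝ → F) x))) := by
  simp only [← eq_compLpL_iff_forall_ae_eq]
  have doubly_commutes_iff := fun t =>
    doubly_commutes_shifts_iff_exists_eq_compLpL (T := A t) hS
  have doubly_commutes_iff_ampliation : ((∀ t s, A t ∘L S s = S s ∘L A t) ∧
      ∀ t s, A t ∘L adjoint (S s) = adjoint (S s) ∘L A t) ↔
      ∃ B : ℝ≥0 → F →L[ℂ] F, IsC0Semigroup B ∧ ∀ t, A t = (B t).compLpL 2 rplus := by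
    rw [← forall_and, forall_congr' doubly_commutes_iff, Classical.skolem]
    refine exists_congr fun B => (and_iff_right_of_imp fun hAB => ?_).symm
    exact isC0Semigroup_of_compLpL (funext hAB ▸ hA)
  refine ⟨doubly_commutes_iff_ampliation, fun hnormal => ⟨fun hcomm => ?_, ?_⟩⟩
  · have hcomm' (t s : ℝ≥0) : A t ∘L adjoint (S s) = adjoint (S s) ∘L A t :=
      have : IsStarNormal (A t) := ⟨(hnormal t).symm⟩
      (this.commute_star_left (hcomm t s)).star_right
    obtain ⟨B, hB, hAB⟩ := doubly_commutes_iff_ampliation.1 ⟨hcomm, hcomm'⟩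
    refine ⟨B, hB, fun t => compLpL_rplus_injective ?_, hAB⟩
    simpa only [hAB, adjoint_compLpL, ← compLpL_comp] using hnormal t
  · rintro ⟨B, hB, -, hAB⟩
    exact (doubly_commutes_iff_ampliation.2 ⟨B, hB, hAB⟩).1
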